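/- Any two even unimodular ℤ-lattices of rank 10 and signature (1,9) are isomorphic. Concretely: if A and B are symmetric 10×10 integer matrices with all diagonal entries even, with determinant of absolute value 1, and such that over ℝ each is congruent to the diagonal matrix diag(1, −1, −1, −1, −1, −1, −1, −1, −1, −1), then there exists P ∈ GL₁₀(ℤ) with Pᵀ A P = B. -/

import Mathlib

open Matrix

/-- The diagonal matrix `diag(1, -1, -1, -1, -1, -1, -1, -1, -1, -1)` of signature
`(1, 9)`. -/
noncomputable def sigD : Matrix (Fin 10) (Fin 10) ℝ :=
  Matrix.diagonal fun i => if i = 0 then 1 else -1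

/-- Row vectors over the integers can be cleared. -/
theorem vec_clear_aux {n : ℕ} : ∀ (N : ℕ) (w : Fin (n+1) → ℤ), ∑ i, (w i).natAbs ≤ N →
    ∃ P : Matrix (Fin (n+1)) (Fin (n+1)) ℤ, IsUnit P.det ∧
      ∃ i d, w ᵥ* P = Pi.single i d := by
  intro N
  induction N with
  | zero =>
    intro w hw
    refine ⟨1, by simp, 0, 0, ?_⟩
    have : w = 0 := by
      funext i
      have h1 : ∑ i, (w i).natAbs = 0 := by omega
      rw [Finset.sum_eq_zero_iff] at h1
      simpa using h1 i
    simp [this]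
  | succ N ih =>
    intro w hw
    by_cases h : ∃ i j, i ≠ j ∧ w i ≠ 0 ∧ w j ≠ 0
    · have h' : ∃ i j, i ≠ j ∧ w i ≠ 0 ∧ w j ≠ 0 ∧ (w j).natAbs ≤ (w i).natAbs := by
        obtain ⟨i, j, hij, hi, hj⟩ := h
        rcases le_total (w j).natAbs (w i).natAbs with h | h
        · exact ⟨i, j, hij, hi, hj, h⟩
        · exact ⟨j, i, hij.symm, hj, hi, h⟩
      obtain ⟨i, j, hij, hi, hj, hle⟩ := h'
      have hc : ∃ c : ℤ, (w i + c * w j).natAbs < (w i).natAbs := by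
        by_cases hs : 0 < w i ↔ 0 < w j
        · exact ⟨-1, by omega⟩
        · exact ⟨1, by omega⟩
      obtain ⟨c, hc⟩ := hc
      have hT : ∀ k, (w ᵥ* transvection j i c) k = w k + if k = i then c * w j else 0 := by
        intro k
        simp only [transvection, vecMul_add, vecMul_one, Pi.add_apply]
        congr 1
        simp only [vecMul, dotProduct, single_apply]
        rw [Finset.sum_eq_single j]
        · by_cases hk : k = i
          · simp [hk, mul_comm]
          · simp [hk, Ne.symm hk]
        · intro b _ hb
          simp [hb.symm]
        · simp
      have hlt : ∑ k, ((w ᵥ* transvection j i c) k).natAbs < ∑ k, (w k).natAbs := by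
        apply Finset.sum_lt_sum
        · intro k _
          rw [hT]
          by_cases hk : k = i
          · subst hk; simp; omega
          · simp [hk]
        · refine ⟨i, Finset.mem_univ _, ?_⟩
          rw [hT]; simpa using hc
      obtain ⟨P, hP, i', d, hd⟩ := ih (w ᵥ* transvection j i c) (by omega)
      refine ⟨transvection j i c * P, ?_, i', d, ?_⟩
      · rw [det_mul, det_transvection_of_ne _ _ hij.symm, one_mul]; exact hP
      · rw [← vecMul_vecMul]; exact hd
    · push Not at h
      by_cases h0 : ∃ i, w i ≠ 0
      · obtain ⟨i, hi⟩ := h0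
        refine ⟨1, by simp, i, w i, ?_⟩
        rw [vecMul_one]
        funext k
        by_cases hk : k = i
        · subst hk; simp
        · simp [hk, h i k (Ne.symm hk) hi]
      · push Not at h0
        refine ⟨1, by simp, 0, 0, ?_⟩
        have : w = 0 := funext h0
        simp [this]

theorem vec_clear {n : ℕ} (w : Fin (n+1) → ℤ) :
    ∃ P : Matrix (Fin (n+1)) (Fin (n+1)) ℤ, IsUnit P.det ∧
      ∃ d, w ᵥ* P = Pi.single 0 d := by
  obtain ⟨P, hP, i, d, hd⟩ := vec_clear_aux _ w le_rfl
  refine ⟨P.submatrix id (Equiv.swap 0 i), ?_, d, ?_⟩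
  · rw [det_permute']
    refine IsUnit.mul ?_ hP
    exact (Units.isUnit _)
  · have : w ᵥ* P.submatrix id (Equiv.swap 0 i) = (w ᵥ* P) ∘ (Equiv.swap 0 i) := by
      funext k; simp [vecMul, dotProduct]
    rw [this, hd]
    funext k
    simp only [Function.comp, Pi.single_apply]
    by_cases hk : k = 0
    · simp [hk]
    · have : Equiv.swap 0 i k ≠ i := by
        intro h
        rw [Equiv.swap_apply_eq_iff] at h
        simp at h; exact hk h
      simp [hk, this]

theorem qf_conj {m n : ℕ} (G : Matrix (Fin m) (Fin m) ℤ) (P : Matrix (Fin m) (Fin n) ℤ)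
    (v w : Fin n → ℤ) : v ⬝ᵥ (Pᵀ * G * P) *ᵥ w = (P *ᵥ v) ⬝ᵥ G *ᵥ (P *ᵥ w) := by
  rw [← mulVec_mulVec, ← mulVec_mulVec, dotProduct_mulVec, vecMul_transpose]

/-- triangular numbers -/
def triN : ℕ → ℕ
  | 0 => 0
  | k+1 => triN k + (k+1)

theorem schur_det {n : ℕ} (G : Matrix (Fin (n+1)) (Fin (n+1)) ℤ) :
    G 0 0 * (Matrix.of fun i j : Fin n => G 0 0 * G i.succ j.succ - G i.succ 0 * G 0 j.succ).det
      = G 0 0 ^ n * G.det := by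
  set T : Matrix (Fin (n+1)) (Fin (n+1)) ℤ :=
    Matrix.of fun i j => Fin.cases (if j = 0 then 1 else 0)
      (fun i' => if j = 0 then - G i'.succ 0 else if j = i'.succ then G 0 0 else 0) i with hT
  have hdetT : T.det = G 0 0 ^ n := by
    rw [det_succ_row_zero, Fin.sum_univ_succ]
    have h1 : T.submatrix Fin.succ (Fin.succAbove 0) = Matrix.diagonal fun _ : Fin n => G 0 0 := by
      ext i j
      simp [hT, Matrix.diagonal_apply, eq_comm]
    rw [h1, det_diagonal]
    simp [hT]
  have hTG : (T * G).det = G 0 0 *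
      (Matrix.of fun i j : Fin n => G 0 0 * G i.succ j.succ - G i.succ 0 * G 0 j.succ).det := by
    rw [det_succ_column_zero, Fin.sum_univ_succ]
    have h0 : ∀ i : Fin n, (T * G) i.succ 0 = 0 := by
      intro i
      rw [mul_apply, Fin.sum_univ_succ]
      simp [hT, Fin.succ_ne_zero]
      ring
    have h1 : (T * G).submatrix (Fin.succAbove 0) Fin.succ =
      Matrix.of fun i j : Fin n => G 0 0 * G i.succ j.succ - G i.succ 0 * G 0 j.succ := by
      ext i j
      simp only [submatrix_apply, Fin.zero_succAbove, of_apply]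
      rw [mul_apply, Fin.sum_univ_succ]
      simp [hT, Fin.succ_ne_zero]
      ring
    have h2 : (T * G) 0 0 = G 0 0 := by
      rw [mul_apply, Fin.sum_univ_succ]
      simp [hT, Fin.succ_ne_zero]
    rw [h1, h2]
    simp [h0]
  rw [← hTG, det_mul, hdetT]

theorem exists_rem (a s : ℤ) (ha : a ≠ 0) : ∃ t : ℤ, 4 * (a * t + s)^2 ≤ a^2 := by
  refine ⟨-((2 * s + |a|) / (2 * |a|)) * a.sign, ?_⟩
  have hpos : 0 < |a| := abs_pos.mpr ha
  have h1 : a * a.sign = |a| := by rw [mul_comm]; exact Int.sign_mul_self_eq_abs a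
  have h2 := Int.emod_add_mul_ediv (2 * s + |a|) (2 * |a|)
  have h3 := Int.emod_nonneg (2 * s + |a|) (b := 2 * |a|) (by omega)
  have h4 := Int.emod_lt_of_pos (2 * s + |a|) (b := 2 * |a|) (by omega)
  set k := (2 * s + |a|) / (2 * |a|)
  have h5 : a * (-k * a.sign) = - (|a| * k) := by rw [← h1]; ring
  rw [h5, ← sq_abs a]
  have h6 : 2 * s - 2 * (|a| * k) + |a| = (2 * s + |a|) % (2 * |a|) := by linarith
  nlinarith

theorem hermite (n : ℕ) : ∀ (G : Matrix (Fin (n+1)) (Fin (n+1)) ℤ), G.IsSymm →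
    ∃ v : Fin (n+1) → ℤ, v ≠ 0 ∧
      3 ^ triN n * |v ⬝ᵥ G *ᵥ v| ^ (n+1) ≤ 4 ^ triN n * |G.det| := by
  induction n with
  | zero =>
    intro G _
    refine ⟨1, one_ne_zero, ?_⟩
    simp [triN, dotProduct, mulVec]
  | succ k ih =>
    intro G hG
    -- minimal vector
    obtain ⟨x, hx0, hxmin⟩ : ∃ x : Fin (k+2) → ℤ, x ≠ 0 ∧ ∀ v : Fin (k+2) → ℤ, v ≠ 0 →
        |x ⬝ᵥ G *ᵥ x| ≤ |v ⬝ᵥ G *ᵥ v| := by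
      classical
      have hne : ∃ N : ℕ, ∃ x : Fin (k+2) → ℤ, x ≠ 0 ∧ (x ⬝ᵥ G *ᵥ x).natAbs = N :=
        ⟨_, 1, one_ne_zero, rfl⟩
      obtain ⟨x, hx0, hx⟩ := Nat.find_spec hne
      refine ⟨x, hx0, fun v hv => ?_⟩
      have := Nat.find_min' hne ⟨v, hv, rfl⟩
      rw [← hx] at this
      rw [Int.abs_eq_natAbs, Int.abs_eq_natAbs]
      exact_mod_cast this
    by_cases hq : x ⬝ᵥ G *ᵥ x = 0
    · refine ⟨x, hx0, ?_⟩
      rw [hq]; simp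
    obtain ⟨P, hP, d, hd⟩ := vec_clear x
    have hPt : IsUnit Pᵀ.det := by rwa [det_transpose]
    set Q := (Pᵀ)⁻¹ with hQ
    have hQP : Q * Pᵀ = 1 := nonsing_inv_mul _ hPt
    have hPQ : Pᵀ * Q = 1 := mul_nonsing_inv _ hPt
    have hQdet : IsUnit Q.det := by
      have : Q.det * Pᵀ.det = 1 := by rw [← det_mul, hQP, det_one]
      exact IsUnit.of_mul_eq_one _ this
    have hQinj : ∀ v, v ≠ 0 → Q *ᵥ v ≠ 0 := by
      intro v hv h
      apply hv
      have : Pᵀ *ᵥ (Q *ᵥ v) = 0 := by rw [h]; simp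
      rwa [mulVec_mulVec, hPQ, one_mulVec] at this
    have hxQ : x = Q *ᵥ Pi.single 0 d := by
      rw [← hd, ← mulVec_transpose, mulVec_mulVec, hQP, one_mulVec]
    set H := Qᵀ * G * Q with hH
    have hHsymm : H.IsSymm := by
      rw [hH, IsSymm, transpose_mul, transpose_mul, transpose_transpose, hG.eq, Matrix.mul_assoc]
    have hHdet : |H.det| = |G.det| := by
      rw [hH, det_mul, det_mul, det_transpose, abs_mul, abs_mul, Int.isUnit_iff_abs_eq.mp hQdet]
      ring
    have hHq : ∀ v, v ⬝ᵥ H *ᵥ v = (Q *ᵥ v) ⬝ᵥ G *ᵥ (Q *ᵥ v) := fun v => qf_conj G Q v v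
    set a := H 0 0 with ha
    have hxa : x ⬝ᵥ G *ᵥ x = d^2 * a := by
      rw [hxQ, ← hHq]
      simp
      ring
    have hd0 : d ≠ 0 := by rintro rfl; apply hq; rw [hxa]; ring
    have ha0 : a ≠ 0 := by intro h; apply hq; rw [hxa, h]; ring
    have hamin : ∀ v, v ≠ 0 → |a| ≤ |v ⬝ᵥ H *ᵥ v| := by
      intro v hv
      rw [hHq]
      refine le_trans ?_ (hxmin _ (hQinj v hv))
      rw [hxa, abs_mul]
      have : 1 ≤ |d^2| := Int.one_le_abs (pow_ne_zero 2 hd0)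
      nlinarith [abs_nonneg a]
    set G' : Matrix (Fin (k+1)) (Fin (k+1)) ℤ :=
      Matrix.of fun i j => H 0 0 * H i.succ j.succ - H i.succ 0 * H 0 j.succ with hG'
    have hG'symm : G'.IsSymm := by
      ext i j
      simp only [hG', transpose_apply, of_apply]
      rw [hHsymm.apply i.succ j.succ, hHsymm.apply 0 j.succ, hHsymm.apply i.succ 0]
      ring
    have hdet' := schur_det H
    rw [← hG', ← ha] at hdet'
    obtain ⟨y, hy0, hy⟩ := ih G' hG'symm
    obtain ⟨t, ht⟩ := exists_rem a (∑ j, H 0 (Fin.succ j) * y j) ha0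
    have hv0 : (Fin.cons t y : Fin (k+2) → ℤ) ≠ 0 := by
      intro h
      apply hy0
      funext i
      have := congrFun h i.succ
      simpa using this
    have hv := hamin _ hv0
    have hkey : a * ((Fin.cons t y : Fin (k+2) → ℤ) ⬝ᵥ H *ᵥ (Fin.cons t y : Fin (k+2) → ℤ)) =
      (a * t + ∑ j, H 0 (Fin.succ j) * y j)^2 + y ⬝ᵥ G' *ᵥ y := by
      have e1 : ∀ i : Fin (k+1), H i.succ 0 = H 0 i.succ := fun i => hHsymm.apply 0 i.succ
      have e2 : y ⬝ᵥ G' *ᵥ y = a * (∑ i, y i * ∑ j, H (Fin.succ i) (Fin.succ j) * y j)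
          - (∑ j, H 0 (Fin.succ j) * y j)^2 := by
        simp only [dotProduct, mulVec, hG', of_apply]
        rw [sq, Finset.sum_mul, Finset.mul_sum, ← Finset.sum_sub_distrib]
        refine Finset.sum_congr rfl fun i _ => ?_
        have e4 : ∑ j, (H 0 0 * H i.succ j.succ - H i.succ 0 * H 0 j.succ) * y j =
            a * (∑ j, H (Fin.succ i) (Fin.succ j) * y j)
              - H 0 i.succ * (∑ j, H 0 (Fin.succ j) * y j) := by
          rw [Finset.mul_sum, Finset.mul_sum, ← Finset.sum_sub_distrib]
          refine Finset.sum_congr rfl fun j _ => ?_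
          rw [e1, ha]; ring
        rw [e4]; ring
      rw [e2]
      have e3 : (Fin.cons t y : Fin (k+2) → ℤ) ⬝ᵥ H *ᵥ (Fin.cons t y : Fin (k+2) → ℤ) =
          t * (a * t + ∑ j, H 0 (Fin.succ j) * y j) +
          ((∑ j, H 0 (Fin.succ j) * y j) * t +
            ∑ i, y i * ∑ j, H (Fin.succ i) (Fin.succ j) * y j) := by
        simp only [dotProduct, mulVec]
        rw [Fin.sum_univ_succ]
        simp only [Fin.cons_zero, Fin.cons_succ]
        congr 1
        · rw [Fin.sum_univ_succ]; simp [ha]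
        · rw [Finset.sum_mul, ← Finset.sum_add_distrib]
          refine Finset.sum_congr rfl fun i _ => ?_
          rw [Fin.sum_univ_succ]
          simp only [Fin.cons_zero, Fin.cons_succ]
          rw [e1]; ring
      rw [e3]; ring
    set Y := y ⬝ᵥ G' *ᵥ y
    have h3 : 3 * |a|^2 ≤ 4 * |Y| := by
      have h1 : |a| * |a| ≤ |a * ((Fin.cons t y : Fin (k+2) → ℤ) ⬝ᵥ H *ᵥ (Fin.cons t y : Fin (k+2) → ℤ))| := by
        rw [abs_mul]; exact mul_le_mul_of_nonneg_left hv (abs_nonneg a)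
      rw [hkey] at h1
      have h2 := abs_add_le ((a * t + ∑ j, H 0 (Fin.succ j) * y j)^2) Y
      rw [abs_of_nonneg (sq_nonneg (a * t + ∑ j, H 0 (Fin.succ j) * y j))] at h2
      have := sq_abs a
      nlinarith
    refine ⟨Q *ᵥ Pi.single 0 1, hQinj _ (by simp), ?_⟩
    rw [← hHq, ← hHdet]
    have : (Pi.single 0 1 : Fin (k+2) → ℤ) ⬝ᵥ H *ᵥ Pi.single 0 1 = a := by
      simp [ha]
    rw [this]
    have hapos : 0 < |a| := abs_pos.mpr ha0
    have hD : |a| * |G'.det| = |a|^(k+1) * |H.det| := by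
      rw [← abs_mul, hdet', abs_mul, abs_pow]
    have hD' : |G'.det| = |a|^k * |H.det| := by
      apply mul_left_cancel₀ hapos.ne'
      rw [hD]; ring
    rw [hD'] at hy
    have h4 : (3 * |a|^2)^(k+1) ≤ (4 * |Y|)^(k+1) := pow_le_pow_left₀ (by positivity) h3 _
    rw [mul_pow, mul_pow] at h4
    have hak : 0 < |a|^k := by positivity
    have : |a|^k * (3 ^ triN (k+1) * |a| ^ (k+1+1)) ≤ |a|^k * (4 ^ triN (k+1) * |H.det|) := by
      calc |a|^k * (3 ^ triN (k+1) * |a| ^ (k+1+1))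
          = 3 ^ triN k * (3^(k+1) * (|a|^2)^(k+1)) := by rw [triN]; ring
        _ ≤ 3 ^ triN k * (4^(k+1) * |Y|^(k+1)) := by gcongr
        _ = 4^(k+1) * (3 ^ triN k * |Y|^(k+1)) := by ring
        _ ≤ 4^(k+1) * (4 ^ triN k * (|a|^k * |H.det|)) := by gcongr
        _ = |a|^k * (4 ^ triN (k+1) * |H.det|) := by rw [triN]; ring
    exact le_of_mul_le_mul_left this hak

theorem ortho_step {n : ℕ} (G : Matrix (Fin (n+1)) (Fin (n+1)) ℤ) (hG : G.IsSymm)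
    (x : Fin (n+1) → ℤ) (hx : x ⬝ᵥ G *ᵥ x ≠ 0) :
    ∃ J : Matrix (Fin (n+1)) (Fin n) ℤ, (∀ v, x ⬝ᵥ G *ᵥ (J *ᵥ v) = 0) ∧
      (∀ v, v ≠ 0 → J *ᵥ v ≠ 0) ∧ (Jᵀ * G * J).IsSymm ∧
      |(Jᵀ * G * J).det| ≤ |x ⬝ᵥ G *ᵥ x| * |G.det| := by
  obtain ⟨P, hP, d, hd⟩ := vec_clear (G *ᵥ x)
  set J : Matrix (Fin (n+1)) (Fin n) ℤ := P.submatrix id Fin.succ with hJ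
  have hJv : ∀ v : Fin n → ℤ, J *ᵥ v = P *ᵥ (Fin.cons 0 v : Fin (n+1) → ℤ) := by
    intro v
    funext i
    simp [mulVec, dotProduct, Fin.sum_univ_succ, hJ]
  have hP1 : P⁻¹ * P = 1 := nonsing_inv_mul _ hP
  have hP2 : P * P⁻¹ = 1 := mul_nonsing_inv _ hP
  have hsym : (Jᵀ * G * J).IsSymm := by
    rw [IsSymm, transpose_mul, transpose_mul, transpose_transpose, hG.eq, Matrix.mul_assoc]
  refine ⟨J, ?_, ?_, hsym, ?_⟩
  · intro v
    rw [hJv, dotProduct_mulVec, ← mulVec_transpose, hG.eq, dotProduct_mulVec, hd]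
    simp [dotProduct, Fin.sum_univ_succ]
  · intro v hv h
    apply hv
    rw [hJv] at h
    have : P⁻¹ *ᵥ (P *ᵥ (Fin.cons 0 v : Fin (n+1) → ℤ)) = 0 := by rw [h]; simp
    rw [mulVec_mulVec, hP1, one_mulVec] at this
    funext i
    simpa using congrFun this i.succ
  · set H := Pᵀ * G * P with hH
    set z := P⁻¹ *ᵥ x with hz
    have hPz : P *ᵥ z = x := by rw [hz, mulVec_mulVec, hP2, one_mulVec]
    have hHz : H *ᵥ z = Pi.single 0 d := by
      rw [hH, ← mulVec_mulVec, hPz, ← mulVec_mulVec, mulVec_transpose, hd]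
    have hq : x ⬝ᵥ G *ᵥ x = d * z 0 := by
      rw [← hPz, ← qf_conj, ← hH, hHz]; simp; ring
    have hHdet : |H.det| = |G.det| := by
      rw [hH, det_mul, det_mul, det_transpose, abs_mul, abs_mul, Int.isUnit_iff_abs_eq.mp hP]
      ring
    have hsub : Jᵀ * G * J = H.submatrix Fin.succ Fin.succ := by
      ext i j
      simp [hH, hJ, mul_apply]
    have hadj : H.adjugate 0 0 = (Jᵀ * G * J).det := by
      rw [adjugate_fin_succ_eq_det_submatrix, hsub]
      simp
    have h1 : H.adjugate *ᵥ (H *ᵥ z) = H.det • z := by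
      rw [mulVec_mulVec, adjugate_mul, smul_mulVec, one_mulVec]
    rw [hHz] at h1
    have h2 := congrFun h1 0
    simp at h2
    rw [hadj] at h2
    rw [hq] at hx ⊢
    have hd0 : d ≠ 0 := left_ne_zero_of_mul hx
    rw [← hHdet, ← abs_mul, mul_right_comm, mul_assoc, ← h2]
    have : d * ((Jᵀ * G * J).det * d) = d^2 * (Jᵀ * G * J).det := by ring
    rw [this, abs_mul]
    have : 1 ≤ |d^2| := Int.one_le_abs (pow_ne_zero 2 hd0)
    nlinarith [abs_nonneg (Jᵀ * G * J).det]

theorem bound_of (n : ℕ) (a D c m : ℤ) (h : 3 ^ triN n * |a| ^ (n+1) ≤ 4 ^ triN n * |D|)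
    (hD : |D| ≤ c) (hm : 0 ≤ m) (hc : 4 ^ triN n * c < 3 ^ triN n * m ^ (n+1)) : |a| < m := by
  by_contra hcon
  push Not at hcon
  have h1 : m ^ (n+1) ≤ |a| ^ (n+1) := pow_le_pow_left₀ hm hcon _
  have h2 : (3:ℤ) ^ triN n * m ^ (n+1) ≤ 3 ^ triN n * |a| ^ (n+1) := by gcongr
  have h3 : (4:ℤ) ^ triN n * |D| ≤ 4 ^ triN n * c := by gcongr
  linarith

theorem short_pair {n : ℕ} (hn : n ≤ 7) (G : Matrix (Fin (n+1)) (Fin (n+1)) ℤ) (hG : G.IsSymm)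
    (hdet : |G.det| = 1) (hneg : ∀ v, v ≠ 0 → v ⬝ᵥ G *ᵥ v < 0) :
    (∃ v, v ⬝ᵥ G *ᵥ v = -1) ∨
    (∃ v w, v ⬝ᵥ G *ᵥ v = -2 ∧ w ⬝ᵥ G *ᵥ w = -2 ∧ v ⬝ᵥ G *ᵥ w = 0) := by
  obtain ⟨v, hv0, hv⟩ := hermite n G hG
  have hvneg := hneg v hv0
  have hb : |v ⬝ᵥ G *ᵥ v| < 3 := by
    refine bound_of n _ _ 1 3 hv hdet.le (by norm_num) ?_
    interval_cases n <;> norm_num [triN]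
  rw [abs_lt] at hb
  by_cases h1 : v ⬝ᵥ G *ᵥ v = -1
  · exact Or.inl ⟨v, h1⟩
  have h2 : v ⬝ᵥ G *ᵥ v = -2 := by omega
  rcases n with _ | k
  · exfalso
    have hb : |v ⬝ᵥ G *ᵥ v| < 2 := by
      refine bound_of 0 _ _ 1 2 hv hdet.le (by norm_num) ?_
      norm_num [triN]
    rw [h2] at hb; norm_num at hb
  obtain ⟨J, hJ1, hJ2, hJ3, hJ4⟩ := ortho_step G hG v (by omega)
  obtain ⟨y, hy0, hy⟩ := hermite k _ hJ3
  rw [qf_conj] at hy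
  have hyneg := hneg _ (hJ2 y hy0)
  have hb : |(J *ᵥ y) ⬝ᵥ G *ᵥ (J *ᵥ y)| < 3 := by
    rw [h2, hdet] at hJ4
    refine bound_of k _ _ 2 3 hy (by simpa using hJ4) (by norm_num) ?_
    have : k ≤ 6 := by omega
    interval_cases k <;> norm_num [triN]
  rw [abs_lt] at hb
  by_cases h3 : (J *ᵥ y) ⬝ᵥ G *ᵥ (J *ᵥ y) = -1
  · exact Or.inl ⟨_, h3⟩
  · exact Or.inr ⟨v, J *ᵥ y, h2, by omega, hJ1 y⟩

theorem even_step {n : ℕ} (G : Matrix (Fin (n+1)) (Fin (n+1)) ℤ) (hG : G.IsSymm)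
    (heven : ∀ v, 2 ∣ v ⬝ᵥ G *ᵥ v) (haniso : ∀ v, v ≠ 0 → v ⬝ᵥ G *ᵥ v ≠ 0) (c : ℤ)
    (hdet : |G.det| ≤ c) (hc : 4 ^ triN n * c < 3 ^ triN n * 4 ^ (n+1)) :
    ∃ x, |x ⬝ᵥ G *ᵥ x| = 2 ∧ ∃ J : Matrix (Fin (n+1)) (Fin n) ℤ,
      (∀ v, x ⬝ᵥ G *ᵥ (J *ᵥ v) = 0) ∧ (Jᵀ * G * J).IsSymm ∧
      (∀ v, 2 ∣ v ⬝ᵥ (Jᵀ * G * J) *ᵥ v) ∧ (∀ v, v ≠ 0 → v ⬝ᵥ (Jᵀ * G * J) *ᵥ v ≠ 0) ∧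
      |(Jᵀ * G * J).det| ≤ 2 * c := by
  obtain ⟨x, hx0, hx⟩ := hermite n G hG
  have h0 := haniso x hx0
  have hb := bound_of n _ _ c 4 hx hdet (by norm_num) hc
  obtain ⟨t, ht⟩ := heven x
  have h2 : |x ⬝ᵥ G *ᵥ x| = 2 := by
    rw [abs_lt] at hb
    rcases abs_choice (x ⬝ᵥ G *ᵥ x) with h | h <;> rw [h] <;>
      have := abs_nonneg (x ⬝ᵥ G *ᵥ x) <;> omega
  obtain ⟨J, hJ1, hJ2, hJ3, hJ4⟩ := ortho_step G hG x h0
  refine ⟨x, h2, J, hJ1, hJ3, ?_, ?_, ?_⟩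
  · intro v; rw [qf_conj]; exact heven _
  · intro v hv; rw [qf_conj]; exact haniso _ (hJ2 v hv)
  · rw [h2] at hJ4; linarith

theorem four_ortho (G : Matrix (Fin 10) (Fin 10) ℤ) (hG : G.IsSymm)
    (heven : ∀ v, 2 ∣ v ⬝ᵥ G *ᵥ v) (haniso : ∀ v, v ≠ 0 → v ⬝ᵥ G *ᵥ v ≠ 0)
    (hdet : |G.det| = 1) :
    ∃ x1 x2 x3 x4 : Fin 10 → ℤ, (|x1 ⬝ᵥ G *ᵥ x1| = 2 ∧ |x2 ⬝ᵥ G *ᵥ x2| = 2 ∧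
      |x3 ⬝ᵥ G *ᵥ x3| = 2 ∧ |x4 ⬝ᵥ G *ᵥ x4| = 2) ∧
      x1 ⬝ᵥ G *ᵥ x2 = 0 ∧ x1 ⬝ᵥ G *ᵥ x3 = 0 ∧ x1 ⬝ᵥ G *ᵥ x4 = 0 ∧
      x2 ⬝ᵥ G *ᵥ x3 = 0 ∧ x2 ⬝ᵥ G *ᵥ x4 = 0 ∧ x3 ⬝ᵥ G *ᵥ x4 = 0 := by
  obtain ⟨x1, hx1, J1, ho1, hs1, he1, ha1, hd1⟩ := even_step G hG heven haniso 1 hdet.le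
    (by norm_num [triN])
  obtain ⟨x2, hx2, J2, ho2, hs2, he2, ha2, hd2⟩ := even_step _ hs1 he1 ha1 _ hd1
    (by norm_num [triN])
  obtain ⟨x3, hx3, J3, ho3, hs3, he3, ha3, hd3⟩ := even_step _ hs2 he2 ha2 _ hd2
    (by norm_num [triN])
  obtain ⟨x4, hx4, J4, ho4, hs4, he4, ha4, hd4⟩ := even_step _ hs3 he3 ha3 _ hd3
    (by norm_num [triN])
  simp only [qf_conj] at hx2 hx3 hx4 ho2 ho3
  exact ⟨x1, J1 *ᵥ x2, J1 *ᵥ (J2 *ᵥ x3), J1 *ᵥ (J2 *ᵥ (J3 *ᵥ x4)), ⟨hx1, hx2, hx3, hx4⟩,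
    ho1 x2, ho1 (J2 *ᵥ x3), ho1 (J2 *ᵥ (J3 *ᵥ x4)), ho2 x3, ho2 (J3 *ᵥ x4), ho3 x4⟩

section lattice
variable {L : Type} [AddCommGroup L]

/-- unimodular -/
def Uni (B : LinearMap.BilinForm ℤ L) : Prop := ∀ φ : L →ₗ[ℤ] ℤ, ∃ x, ∀ y, B x y = φ y

/-- symmetric -/
def Sy (B : LinearMap.BilinForm ℤ L) : Prop := ∀ x y, B x y = B y x

/-- Lorentzian -/
def Lor (B : LinearMap.BilinForm ℤ L) : Prop :=
  ∀ u y, 0 < B u u → B u y = 0 → y ≠ 0 → B y y < 0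

theorem lor_of (B : LinearMap.BilinForm ℤ L) (hS : Sy B) (x0 : L)
    (hneg : ∀ y, B x0 y = 0 → y ≠ 0 → B y y < 0) : Lor B := by
  intro u y hu huy hy
  by_cases hb : B x0 y = 0
  · exact hneg y hb hy
  by_contra hcon
  push Not at hcon
  have h1 : B x0 (B x0 y • u - B x0 u • y) = 0 := by
    simp; ring
  have hyu : B y u = 0 := by rw [hS]; exact huy
  have h2 : B (B x0 y • u - B x0 u • y) (B x0 y • u - B x0 u • y) =
      (B x0 y)^2 * B u u + (B x0 u)^2 * B y y := by
    simp [huy, hyu]; ring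
  have hb2 : 0 < (B x0 y)^2 := by positivity
  have h3 : 0 < B (B x0 y • u - B x0 u • y) (B x0 y • u - B x0 u • y) := by
    rw [h2]
    have : 0 ≤ (B x0 u)^2 * B y y := by positivity
    have : 0 < (B x0 y)^2 * B u u := by positivity
    linarith
  by_cases h0 : B x0 y • u - B x0 u • y = 0
  · rw [h0] at h3; simp at h3
  · have := hneg _ h1 h0
    linarith

theorem prim_iso (B : LinearMap.BilinForm ℤ L) (hS : Sy B) (z y0 : L) (hzy : B z y0 ≠ 0)
    (hU : Uni B) (hz : B z z = 0) : ∃ e f, B e e = 0 ∧ B e f = 1 := by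
  obtain ⟨d, hd⟩ := (IsPrincipalIdealRing.principal (LinearMap.range (B z))).principal
  have hdm : d ∈ LinearMap.range (B z) := by rw [hd]; exact Submodule.mem_span_singleton_self d
  obtain ⟨f, hf⟩ := hdm
  have hdvd : ∀ y, d ∣ B z y := by
    intro y
    have : B z y ∈ LinearMap.range (B z) := ⟨y, rfl⟩
    rw [hd, Submodule.mem_span_singleton] at this
    obtain ⟨k, hk⟩ := this
    exact ⟨k, by rw [← hk, smul_eq_mul, mul_comm]⟩
  have hd0 : d ≠ 0 := by
    rintro rfl
    exact hzy (zero_dvd_iff.mp (hdvd y0))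
  let φ : L →ₗ[ℤ] ℤ :=
    { toFun := fun y => B z y / d
      map_add' := by intro a b; rw [map_add, Int.add_ediv_of_dvd_left (hdvd a)]
      map_smul' := by
        intro c a
        rw [map_smul, smul_eq_mul, Int.mul_ediv_assoc _ (hdvd a)]; rfl }
  obtain ⟨e, he⟩ := hU φ
  have he' : ∀ y, d * B e y = B z y := by
    intro y
    rw [he]; exact Int.mul_ediv_cancel' (hdvd y)
  refine ⟨e, f, ?_, ?_⟩
  · have h1 : B e z = 0 := by
      have := he' z
      rw [hz] at this
      exact (mul_eq_zero.mp this).resolve_left hd0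
    have h2 := he' e
    rw [hS z e, h1] at h2
    exact (mul_eq_zero.mp h2).resolve_left hd0
  · have := he' f
    rw [hf] at this
    exact mul_left_cancel₀ hd0 (by rw [this, mul_one])

theorem uni_nondeg [Module.Free ℤ L] (B : LinearMap.BilinForm ℤ L) (hS : Sy B) (hU : Uni B)
    (z : L) (hz : z ≠ 0) : ∃ y, B z y ≠ 0 := by
  by_contra hcon
  push Not at hcon
  apply hz
  rw [← Module.forall_dual_apply_eq_zero_iff ℤ z]
  intro φ
  obtain ⟨x, hx⟩ := hU φ
  rw [← hx, hS, hcon]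

theorem gram_det {n : ℕ} (B : LinearMap.BilinForm ℤ L) (hU : Uni B)
    (b : Module.Basis (Fin n) ℤ L) : |(LinearMap.BilinForm.toMatrix b B).det| = 1 := by
  choose x hx using fun j => hU (b.coord j)
  have : (Matrix.of fun j k => b.repr (x j) k) * LinearMap.BilinForm.toMatrix b B = 1 := by
    ext j i
    have h1 := hx j (b i)
    rw [mul_apply]
    simp only [of_apply, LinearMap.BilinForm.toMatrix_apply]
    have h2 : ∑ k, b.repr (x j) k * B (b k) (b i) = B (x j) (b i) := by
      have h3 := congrArg (fun t => B t (b i)) (b.sum_repr (x j))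
      simp only [map_sum, map_smul, LinearMap.sum_apply, LinearMap.smul_apply, smul_eq_mul] at h3
      exact h3
    rw [h2, h1]
    simp [Matrix.one_apply, Finsupp.single_apply, eq_comm]
  rw [← Int.isUnit_iff_abs_eq]
  have h := congrArg Matrix.det this
  rw [det_mul, det_one] at h
  exact IsUnit.of_mul_eq_one _ (by rw [mul_comm]; exact h)

theorem gram_symm {n : ℕ} (B : LinearMap.BilinForm ℤ L) (hS : Sy B)
    (b : Module.Basis (Fin n) ℤ L) : (LinearMap.BilinForm.toMatrix b B).IsSymm := by
  ext i j
  simp [LinearMap.BilinForm.toMatrix_apply, hS (b i) (b j)]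

theorem gram_eval {n : ℕ} (B : LinearMap.BilinForm ℤ L)
    (b : Module.Basis (Fin n) ℤ L) (v w : Fin n → ℤ) :
    v ⬝ᵥ (LinearMap.BilinForm.toMatrix b B) *ᵥ w = B (b.equivFun.symm v) (b.equivFun.symm w) := by
  rw [LinearMap.BilinForm.dotProduct_toMatrix_mulVec]

/-- restriction of the form to the orthogonal complement -/
abbrev cB (B : LinearMap.BilinForm ℤ L) (x : L) : LinearMap.BilinForm ℤ (LinearMap.ker (B x)) :=
  B.restrict (LinearMap.ker (B x))

theorem split_uni (B : LinearMap.BilinForm ℤ L) (hU : Uni B) (x : L) (ε : ℤ)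
    (hx : B x x = ε) (hε : ε * ε = 1) : Uni (cB B x) := by
  intro φ
  let π : L →ₗ[ℤ] LinearMap.ker (B x) :=
    { toFun := fun y => ⟨y - (ε * B x y) • x, by
        rw [LinearMap.mem_ker]; simp [hx]; linear_combination (- B x y) * hε⟩
      map_add' := by intro a b; ext; simp [mul_add, add_smul]; abel
      map_smul' := by intro c a; ext; simp [smul_sub, smul_smul]; congr 1; ring }
  obtain ⟨y, hy⟩ := hU (φ ∘ₗ π)
  refine ⟨π y, fun m => ?_⟩
  have hm : B x m = 0 := m.2
  have h1 : π m = m := by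
    ext; simp [π, hm]
  have h2 := hy m
  rw [LinearMap.comp_apply, h1] at h2
  rw [← h2]
  change B (y - (ε * B x y) • x) m = _
  simp [hm]

theorem split_sy (B : LinearMap.BilinForm ℤ L) (hS : Sy B) (x : L) : Sy (cB B x) :=
  fun a b => hS a b

theorem split_lor (B : LinearMap.BilinForm ℤ L) (hS : Lor B) (x : L) : Lor (cB B x) := by
  intro u y hu huy hy
  exact hS u y hu huy (by simpa using hy)

theorem split_basis (B : LinearMap.BilinForm ℤ L) (x : L) (ε : ℤ)
    (hx : B x x = ε) (hε : ε * ε = 1) {k : ℕ} (b : Module.Basis (Fin k) ℤ (LinearMap.ker (B x))) :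
    ∃ b' : Module.Basis (Fin (k+1)) ℤ L, ∀ i, b' i = (Fin.cons x (fun j => (b j : L)) : Fin (k+1) → L) i := by
  have hε0 : ε ≠ 0 := by rintro rfl; simp at hε
  refine ⟨Module.Basis.mkFinCons x b ?_ ?_, ?_⟩
  · intro c y hy h
    have := congrArg (B x) h
    rw [LinearMap.mem_ker] at hy
    simp [hy, hx, hε0] at this
    exact this
  · intro z
    refine ⟨-(ε * B x z), ?_⟩
    rw [LinearMap.mem_ker]; simp [hx]; linear_combination (- B x z) * hε
  · intro i
    rw [Module.Basis.coe_mkFinCons]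
    rfl

theorem split_rank [Module.Free ℤ L] [Module.Finite ℤ L] (B : LinearMap.BilinForm ℤ L) (x : L) (ε : ℤ)
    (hx : B x x = ε) (hε : ε * ε = 1) :
    Module.finrank ℤ L = Module.finrank ℤ (LinearMap.ker (B x)) + 1 := by
  obtain ⟨b', -⟩ := split_basis B x ε hx hε (Module.finBasis ℤ (LinearMap.ker (B x)))
  rw [Module.finrank_eq_card_basis b']; simp

theorem iso_odd [Module.Free ℤ L] [Module.Finite ℤ L] (B : LinearMap.BilinForm ℤ L) (hS : Sy B)
    (hU : Uni B) (hL : Lor B) (n : ℕ) (hn : n ≤ 7) (hr : Module.finrank ℤ L = n + 2)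
    (x0 : L) (hx0 : B x0 x0 = 1) : ∃ z, z ≠ 0 ∧ B z z = 0 := by
  have hrF := split_rank B x0 1 hx0 (by norm_num)
  have hU' := split_uni B hU x0 1 hx0 (by norm_num)
  have hS' := split_sy B hS x0
  let b := Module.finBasisOfFinrankEq ℤ (LinearMap.ker (B x0)) (n := n+1) (by omega)
  have hnz : ∀ (c : ℤ) (y : LinearMap.ker (B x0)), c ≠ 0 → c • x0 + (y : L) ≠ 0 := by
    intro c y hc h
    have := congrArg (B x0) h
    have hy : B x0 y = 0 := y.2
    simp [hy, hx0] at this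
    exact hc this
  have hval : ∀ (c : ℤ) (y : LinearMap.ker (B x0)),
      B (c • x0 + (y : L)) (c • x0 + (y : L)) = c^2 + cB B x0 y y := by
    intro c y
    have hy : B x0 y = 0 := y.2
    have hy' : B y x0 = 0 := by rw [hS]; exact hy
    simp [hy, hy', hx0]; ring
  rcases short_pair hn (LinearMap.BilinForm.toMatrix b (cB B x0)) (gram_symm _ hS' b)
    (gram_det _ hU' b) (by
      intro v hv
      rw [gram_eval]
      refine hL x0 _ (by rw [hx0]; norm_num) (b.equivFun.symm v).2 ?_
      intro h
      apply hv
      have h' : b.equivFun.symm v = 0 := Subtype.ext h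
      exact (LinearEquiv.map_eq_zero_iff _).mp h') with ⟨v, hv⟩ | ⟨v, w, hv, hw, hvw⟩
  · rw [gram_eval] at hv
    exact ⟨_, hnz 1 (b.equivFun.symm v) one_ne_zero, by rw [hval, hv]; norm_num⟩
  · rw [gram_eval] at hv hw hvw
    refine ⟨_, hnz 2 (b.equivFun.symm v + b.equivFun.symm w) two_ne_zero, ?_⟩
    have hwv := hvw
    rw [hS'] at hwv
    rw [hval]
    generalize b.equivFun.symm v = v' at *
    generalize b.equivFun.symm w = w' at *
    have : cB B x0 (v' + w') (v' + w') =
        cB B x0 v' v' + cB B x0 v' w' + (cB B x0 w' v' + cB B x0 w' w') := by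
      simp only [map_add, LinearMap.add_apply]; ring
    rw [this, hv, hw, hvw, hwv]; norm_num

end lattice

/-- signs -/
def sgn (n : ℕ) (i : Fin (n+1)) : ℤ := if i = Fin.last n then 1 else -1

theorem descent (n : ℕ) : n ≤ 8 → ∀ {L : Type} [AddCommGroup L]
    [Module.Free ℤ L] [Module.Finite ℤ L] (B : LinearMap.BilinForm ℤ L), Sy B → Uni B → Lor B →
    Module.finrank ℤ L = n + 1 → (∃ x0, B x0 x0 = 1) →
    ∃ b : Module.Basis (Fin (n+1)) ℤ L, ∀ i j, B (b i) (b j) = if i = j then sgn n i else 0 := by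
  induction n with
  | zero =>
    intro _ L _ _ _ B hS hU hL hr ⟨x0, hx0⟩
    have hrF := split_rank B x0 1 hx0 (by norm_num)
    let b := Module.finBasisOfFinrankEq ℤ (LinearMap.ker (B x0)) (n := 0) (by omega)
    obtain ⟨b', hb'⟩ := split_basis B x0 1 hx0 (by norm_num) b
    refine ⟨b', fun i j => ?_⟩
    have hi : i = 0 := by omega
    have hj : j = 0 := by omega
    subst hi; subst hj
    rw [hb']; simp [hx0, sgn]
  | succ n ih =>
    intro hn L _ _ _ B hS hU hL hr ⟨x0, hx0⟩
    obtain ⟨z, hz0, hz⟩ := iso_odd B hS hU hL n (by omega) hr x0 hx0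
    obtain ⟨y0, hy0⟩ := uni_nondeg B hS hU z hz0
    obtain ⟨e, f, hee, hef⟩ := prim_iso B hS z y0 hy0 hU hz
    have hfodd : ∃ f, B e f = 1 ∧ ∃ k, B f f = 2 * k + 1 := by
      rcases Int.even_or_odd' (B f f) with ⟨k, hk | hk⟩
      · refine ⟨x0 + (1 - B e x0) • f, ?_, ?_⟩
        · simp [hef]
        · refine ⟨(1 - B e x0) * B x0 f + (1 - B e x0)^2 * k, ?_⟩
          simp [hx0, hk, hS f x0]; ring
      · exact ⟨f, hef, k, hk⟩
    obtain ⟨f, hef, k, hk⟩ := hfodd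
    have hfe : B f e = 1 := by rw [hS]; exact hef
    have hw : B (f - (k+1) • e) (f - (k+1) • e) = -1 := by
      simp [hee, hef, hfe, hk]; ring
    have hu : B (f - k • e) (f - k • e) = 1 := by
      simp [hee, hef, hfe, hk]; ring
    have hwu : B (f - (k+1) • e) (f - k • e) = 0 := by
      simp [hee, hef, hfe, hk]; ring
    set w := f - (k+1) • e
    have hrF := split_rank B w (-1) hw (by norm_num)
    obtain ⟨b, hb⟩ := ih (by omega) (cB B w) (split_sy B hS w) (split_uni B hU w (-1) hw (by norm_num))
      (split_lor B hL w) (by omega) ⟨⟨f - k • e, hwu⟩, hu⟩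
    obtain ⟨b', hb'⟩ := split_basis B w (-1) hw (by norm_num) b
    refine ⟨b', fun i j => ?_⟩
    rw [hb', hb']
    have hwb : ∀ i, B w (b i) = 0 := fun i => (b i).2
    refine Fin.cases ?_ (fun i => ?_) i <;> refine Fin.cases ?_ (fun j => ?_) j
    · simp [hw, sgn, Fin.ext_iff]
    · simp [hwb, (Fin.succ_ne_zero _).symm]
    · simp [hS _ w, hwb]
    · have := hb i j
      simp only [Fin.cons_succ, Fin.succ_inj]
      have h2 : sgn (n+1) i.succ = sgn n i := by
        simp [sgn, ← Fin.succ_last]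
      rw [h2, ← this]
      rfl

section lattice2
variable {L : Type} [AddCommGroup L]

theorem four_iso (B : LinearMap.BilinForm ℤ L) (hS : Sy B) (x1 x2 x3 x4 v : L) (ε : ℤ)
    (hε : ε * ε = 1) (h1 : B x1 x1 = 2 * ε) (h2 : B x2 x2 = 2 * ε) (h3 : B x3 x3 = 2 * ε)
    (h4 : B x4 x4 = 2 * ε) (h12 : B x1 x2 = 0) (h13 : B x1 x3 = 0) (h14 : B x1 x4 = 0)
    (h23 : B x2 x3 = 0) (h24 : B x2 x4 = 0) (h34 : B x3 x4 = 0) (hv : 0 < -ε * B v v) :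
    ∃ z, z ≠ 0 ∧ B z z = 0 := by
  have h21 : B x2 x1 = 0 := by rw [hS]; exact h12
  have h31 : B x3 x1 = 0 := by rw [hS]; exact h13
  have h41 : B x4 x1 = 0 := by rw [hS]; exact h14
  have h32 : B x3 x2 = 0 := by rw [hS]; exact h23
  have h42 : B x4 x2 = 0 := by rw [hS]; exact h24
  have h43 : B x4 x3 = 0 := by rw [hS]; exact h34
  obtain ⟨k, hk⟩ : ∃ k : ℕ, (k : ℤ) =
      2 * (-ε * B v v) + ((B v x1)^2 + (B v x2)^2 + (B v x3)^2 + (B v x4)^2) :=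
    ⟨_, Int.toNat_of_nonneg (by positivity)⟩
  obtain ⟨a, b, c, d, habcd⟩ := Nat.sum_four_squares k
  set p := (2:ℤ) • v - (ε * B v x1) • x1 - (ε * B v x2) • x2 - (ε * B v x3) • x3
    - (ε * B v x4) • x4 with hp
  have e1 : B p x1 = 0 := by
    simp only [hp, map_sub, map_smul, LinearMap.sub_apply, LinearMap.smul_apply, smul_eq_mul,
      h1, h21, h31, h41]
    linear_combination (-2 * B v x1) * hε
  have e2 : B p x2 = 0 := by
    simp only [hp, map_sub, map_smul, LinearMap.sub_apply, LinearMap.smul_apply, smul_eq_mul,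
      h2, h12, h32, h42]
    linear_combination (-2 * B v x2) * hε
  have e3 : B p x3 = 0 := by
    simp only [hp, map_sub, map_smul, LinearMap.sub_apply, LinearMap.smul_apply, smul_eq_mul,
      h3, h13, h23, h43]
    linear_combination (-2 * B v x3) * hε
  have e4 : B p x4 = 0 := by
    simp only [hp, map_sub, map_smul, LinearMap.sub_apply, LinearMap.smul_apply, smul_eq_mul,
      h4, h14, h24, h34]
    linear_combination (-2 * B v x4) * hε
  have epv : B p v = -ε * k := by
    rw [hk]
    simp only [hp, map_sub, map_smul, LinearMap.sub_apply, LinearMap.smul_apply, smul_eq_mul,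
      hS x1 v, hS x2 v, hS x3 v, hS x4 v]
    linear_combination (-2 * B v v) * hε
  have epp : B p p = -2 * ε * k := by
    have : B p p = 2 * B p v := by
      have h := congrArg (B p) hp
      simp only [map_sub, map_smul, smul_eq_mul, e1, e2, e3, e4] at h
      rw [h]; ring
    rw [this, epv]; ring
  have f1 : B x1 p = 0 := by rw [hS]; exact e1
  have f2 : B x2 p = 0 := by rw [hS]; exact e2
  have f3 : B x3 p = 0 := by rw [hS]; exact e3
  have f4 : B x4 p = 0 := by rw [hS]; exact e4
  clear_value p
  have hkpos : (0:ℤ) < k := by rw [hk]; positivity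
  have hε0 : ε ≠ 0 := by rintro rfl; simp at hε
  refine ⟨p + (a:ℤ) • x1 + (b:ℤ) • x2 + (c:ℤ) • x3 + (d:ℤ) • x4, ?_, ?_⟩
  · intro h
    have := congrArg (B p) h
    simp only [map_add, map_smul, smul_eq_mul, e1, e2, e3, e4, epp, map_zero] at this
    have h5 : -2 * ε * (k:ℤ) ≠ 0 := by
      refine mul_ne_zero (mul_ne_zero (by norm_num) hε0) hkpos.ne'
    apply h5; linarith
  · simp only [map_add, map_smul, LinearMap.add_apply, LinearMap.smul_apply, smul_eq_mul, e1, e2,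
      e3, e4, f1, f2, f3, f4, epp, h1, h2, h3, h4, h12, h13, h14, h23, h24, h34, h21, h31, h41,
      h32, h42, h43]
    have : (a:ℤ)^2 + b^2 + c^2 + d^2 = k := by exact_mod_cast habcd
    rw [← this]; ring

theorem iso_even (B : LinearMap.BilinForm ℤ L) (hS : Sy B)
    (hU : Uni B) (heven : ∀ v, 2 ∣ B v v) (b : Module.Basis (Fin 10) ℤ L)
    (p m : L) (hp : 0 < B p p) (hm : B m m < 0) : ∃ z, z ≠ 0 ∧ B z z = 0 := by
  by_contra hcon
  push Not at hcon
  obtain ⟨x1, x2, x3, x4, ⟨h1, h2, h3, h4⟩, h12, h13, h14, h23, h24, h34⟩ :=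
    four_ortho (LinearMap.BilinForm.toMatrix b B) (gram_symm B hS b)
      (by intro v; rw [gram_eval]; exact heven _)
      (by
        intro v hv; rw [gram_eval]
        exact hcon _ (fun h => hv ((LinearEquiv.map_eq_zero_iff _).mp h)))
      (gram_det B hU b)
  rw [gram_eval] at h1 h2 h3 h4 h12 h13 h14 h23 h24 h34
  generalize b.equivFun.symm x1 = x1 at *
  generalize b.equivFun.symm x2 = x2 at *
  generalize b.equivFun.symm x3 = x3 at *
  generalize b.equivFun.symm x4 = x4 at *
  have mixed : ∀ x y, |B x x| = 2 → |B y y| = 2 → B x y = 0 → B x x = B y y := by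
    intro x y hx hy hxy
    by_contra hne
    have hs : B x x + B y y = 0 := by
      rcases (abs_eq (by norm_num : (0:ℤ) ≤ 2)).mp hx with h | h <;>
      rcases (abs_eq (by norm_num : (0:ℤ) ≤ 2)).mp hy with h' | h' <;> omega
    have hyx : B y x = 0 := by rw [hS]; exact hxy
    refine hcon (x + y) ?_ ?_
    · intro h
      have := congrArg (B x) h
      simp only [map_add, map_zero, hxy] at this
      rw [add_zero] at this; rw [this] at hx; norm_num at hx
    · simp only [map_add, LinearMap.add_apply, hxy, hyx]; linarith
  have g2 := mixed x1 x2 h1 h2 h12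
  have g3 := mixed x1 x3 h1 h3 h13
  have g4 := mixed x1 x4 h1 h4 h14
  rcases (abs_eq (by norm_num : (0:ℤ) ≤ 2)).mp h1 with h | h
  · obtain ⟨z, hz, hz'⟩ := four_iso B hS x1 x2 x3 x4 m 1 (by norm_num) (by omega) (by omega)
      (by omega) (by omega) h12 h13 h14 h23 h24 h34 (by omega)
    exact hcon z hz hz'
  · obtain ⟨z, hz, hz'⟩ := four_iso B hS x1 x2 x3 x4 p (-1) (by norm_num) (by omega) (by omega)
      (by omega) (by omega) h12 h13 h14 h23 h24 h34 (by omega)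
    exact hcon z hz hz'

/-- the standard form on `ℤ^10` -/
def etaF (v w : ℤ × (Fin 9 → ℤ)) : ℤ := - (v.1 * w.1) + ∑ i, sgn 8 i * (v.2 i * w.2 i)

/-- twice the standard even unimodular lattice inside `ℤ^10` -/
def inS (v : ℤ × (Fin 9 → ℤ)) : Prop :=
  ∃ (ε d0 : ℤ) (d : Fin 9 → ℤ), v.1 = ε + 2 * d0 ∧ (∀ i, v.2 i = ε + 2 * d i) ∧
    2 ∣ d0 + ∑ i, d i

/-- the form `⟨1⟩ ⊕ M` -/
def addOne {M : Type} [AddCommGroup M] (B : LinearMap.BilinForm ℤ M) :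
    LinearMap.BilinForm ℤ (ℤ × M) :=
  LinearMap.mk₂ ℤ (fun x y => x.1 * y.1 + B x.2 y.2)
    (by intro a b c; simp; ring) (by intro r a c; simp; ring)
    (by intro a b c; simp; ring) (by intro r a c; simp; ring)

theorem addOne_apply {M : Type} [AddCommGroup M] (B : LinearMap.BilinForm ℤ M) (x y : ℤ × M) :
    addOne B x y = x.1 * y.1 + B x.2 y.2 := rfl

theorem diag_eval {N : Type} [AddCommGroup N] (B : LinearMap.BilinForm ℤ N)
    (c : Module.Basis (Fin 9) ℤ N) (hc : ∀ i j, B (c i) (c j) = if i = j then sgn 8 i else 0)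
    (x y : N) : B x y = ∑ i, sgn 8 i * (c.equivFun x i * c.equivFun y i) := by
  have h := gram_eval B c (c.equivFun x) (c.equivFun y)
  rw [LinearEquiv.symm_apply_apply, LinearEquiv.symm_apply_apply] at h
  rw [← h]
  have : LinearMap.BilinForm.toMatrix c B = Matrix.diagonal (sgn 8) := by
    ext i j
    rw [LinearMap.BilinForm.toMatrix_apply, hc, Matrix.diagonal_apply]
  rw [this]
  simp only [dotProduct, mulVec_diagonal]
  refine Finset.sum_congr rfl fun i _ => ?_
  ring

theorem sgn_odd (i : Fin 9) : sgn 8 i = 1 ∨ sgn 8 i = -1 := by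
  unfold sgn; split_ifs <;> simp

theorem good_basis {M : Type} [AddCommGroup M] [Module.Free ℤ M] [Module.Finite ℤ M]
    (B : LinearMap.BilinForm ℤ M) (hS : Sy B) (hU : Uni B) (heven : ∀ v, 2 ∣ B v v)
    (hneg : ∀ v, v ≠ 0 → B v v < 0) (hr : Module.finrank ℤ M = 8) :
    ∃ c : Module.Basis (Fin 9) ℤ (ℤ × M),
      (∀ i j, addOne B (c i) (c j) = if i = j then sgn 8 i else 0) ∧
      ∀ i, 4 ∣ c.equivFun (1, 0) i - 1 := by
  have hS' : Sy (addOne B) := by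
    intro x y; rw [addOne_apply, addOne_apply, hS x.2]; ring
  have hU' : Uni (addOne B) := by
    intro φ
    obtain ⟨y, hy⟩ := hU (φ ∘ₗ LinearMap.inr ℤ ℤ M)
    refine ⟨(φ (1, 0), y), fun z => ?_⟩
    rw [addOne_apply, hy]
    have : z = z.1 • ((1:ℤ), (0:M)) + LinearMap.inr ℤ ℤ M z.2 := by
      ext <;> simp
    conv_rhs => rw [this]
    rw [map_add, map_smul]
    simp [mul_comm]
  have hL' : Lor (addOne B) := by
    refine lor_of _ hS' (1, 0) ?_
    intro y h1 h2
    rw [addOne_apply] at h1 ⊢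
    simp at h1
    have : y.2 ≠ 0 := by
      intro h; apply h2; ext <;> simp [h1, h]
    have := hneg _ this
    rw [h1]; simpa using this
  obtain ⟨c, hc⟩ := descent 8 le_rfl (addOne B) hS' hU' hL' (by
    rw [Module.finrank_prod, hr]; simp) ⟨(1, 0), by simp [addOne_apply]⟩
  have hodd : ∀ i, (c i).1 % 2 = 1 := by
    intro i
    have h1 := hc i i
    rw [if_pos rfl, addOne_apply] at h1
    obtain ⟨k, hk⟩ := heven (c i).2
    rw [hk] at h1
    have h2 : ((c i).1 * (c i).1) % 2 = 1 := by
      rcases sgn_odd i with h | h <;> rw [h] at h1 <;> omega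
    rcases Int.emod_two_eq_zero_or_one (c i).1 with h | h
    · rw [Int.mul_emod, h] at h2; norm_num at h2
    · exact h
  have hex : ∀ i, ∃ u : ℤˣ, 4 ∣ sgn 8 i * ((u : ℤ) * (c i).1) - 1 := by
    intro i
    have := hodd i
    by_cases h4 : 4 ∣ sgn 8 i * (c i).1 - 1
    · exact ⟨1, by simpa using h4⟩
    · refine ⟨-1, ?_⟩
      rcases sgn_odd i with h | h <;> rw [h] at h4 ⊢ <;> simp at h4 ⊢ <;> omega
  choose u hu using hex
  have hcu : ∀ i j, addOne B (c.unitsSMul u i) (c.unitsSMul u j) = if i = j then sgn 8 i else 0 := by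
    intro i j
    rw [Module.Basis.unitsSMul_apply, Module.Basis.unitsSMul_apply, Units.smul_def, Units.smul_def,
      map_smul, map_smul, LinearMap.smul_apply, hc]
    by_cases hij : i = j
    · subst hij
      have : (u i : ℤ) * (u i : ℤ) = 1 := by
        rcases Int.units_eq_one_or (u i) with h | h <;> rw [h] <;> norm_num
      simp only [if_pos, smul_eq_mul]
      rw [← mul_assoc, this, one_mul]
    · simp [hij]
  refine ⟨c.unitsSMul u, hcu, ?_⟩
  intro i
  have h1 := diag_eval (addOne B) _ hcu (1, 0) (c.unitsSMul u i)
  have h2 : ∀ j, (c.unitsSMul u).equivFun (c.unitsSMul u i) j = if i = j then 1 else 0 := by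
    intro j
    rw [Module.Basis.equivFun_self]
  simp only [h2] at h1
  simp at h1
  rw [addOne_apply, Module.Basis.unitsSMul_apply, Units.smul_def] at h1
  simp at h1
  have h3 := hu i
  rw [h1] at h3
  have h4 : sgn 8 i * sgn 8 i = 1 := by rcases sgn_odd i with h | h <;> rw [h] <;> norm_num
  rw [← mul_assoc, h4, one_mul] at h3
  simpa using h3

end lattice2

section lattice3
variable {L : Type} [AddCommGroup L] [Module.Free ℤ L] [Module.Finite ℤ L]

theorem hyp_split (B : LinearMap.BilinForm ℤ L) (hS : Sy B) (hU : Uni B) (hL : Lor B)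
    (heven : ∀ v, 2 ∣ B v v) (hr : Module.finrank ℤ L = 10) (e f : L)
    (hee : B e e = 0) (hef : B e f = 1) (hff : B f f = 0) :
    ∃ (M : Submodule ℤ L) (Φ : L ≃ₗ[ℤ] ℤ × ℤ × M),
      Uni (B.restrict M) ∧ (∀ v : M, v ≠ 0 → B v v < 0) ∧ Module.finrank ℤ M = 8 ∧
      ∀ v w, B v w = (Φ v).1 * (Φ w).2.1 + (Φ v).2.1 * (Φ w).1
        + B.restrict M (Φ v).2.2 (Φ w).2.2 := by
  have hfe : B f e = 1 := by rw [hS]; exact hef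
  let M : Submodule ℤ L := LinearMap.ker (B e) ⊓ LinearMap.ker (B f)
  have hMe : ∀ m : M, B e m = 0 := fun m => (Submodule.mem_inf.mp m.2).1
  have hMf : ∀ m : M, B f m = 0 := fun m => (Submodule.mem_inf.mp m.2).2
  let π : L →ₗ[ℤ] M :=
    { toFun := fun y => ⟨y - B f y • e - B e y • f, by
        refine Submodule.mem_inf.mpr ⟨?_, ?_⟩ <;> rw [LinearMap.mem_ker] <;>
          simp [hee, hef, hff, hfe]⟩
      map_add' := by intro a b; ext; simp [add_smul]; abel
      map_smul' := by intro c a; ext; simp [smul_sub, smul_smul] }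
  have hπ : ∀ y, ((π y : M) : L) = y - B f y • e - B e y • f := fun y => rfl
  have hπM : ∀ m : M, π m = m := by
    intro m; ext; rw [hπ, hMe, hMf]; simp
  let Φ : L ≃ₗ[ℤ] ℤ × ℤ × M :=
    { ((B f).prod ((B e).prod π)) with
      invFun := fun x => x.1 • e + x.2.1 • f + (x.2.2 : L)
      left_inv := by
        intro v
        change B f v • e + B e v • f + (π v : L) = v
        rw [hπ]; abel
      right_inv := by
        intro x
        have e1 := hMe x.2.2
        have e2 := hMf x.2.2
        refine Prod.ext ?_ (Prod.ext ?_ (Subtype.ext ?_))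
        · change B f (x.1 • e + x.2.1 • f + (x.2.2 : L)) = x.1
          simp [hfe, hff, e2]
        · change B e (x.1 • e + x.2.1 • f + (x.2.2 : L)) = x.2.1
          simp [hee, hef, e1]
        · change ((π (x.1 • e + x.2.1 • f + (x.2.2 : L)) : M) : L) = x.2.2
          rw [hπ]
          simp [hfe, hff, hee, hef, e1, e2]
          abel }
  have hΦ : ∀ v, Φ v = (B f v, B e v, π v) := fun v => rfl
  refine ⟨M, Φ, ?_, ?_, ?_, ?_⟩
  · intro φ
    obtain ⟨y, hy⟩ := hU (φ ∘ₗ π)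
    refine ⟨π y, fun m => ?_⟩
    have h2 := hy m
    rw [LinearMap.comp_apply, hπM] at h2
    rw [← h2]
    change B (π y : L) m = _
    rw [hπ]
    simp [hMe, hMf]
  · intro m hm
    refine hL (e + f) m ?_ ?_ (by simpa using hm)
    · simp [hee, hef, hff, hfe]
    · simp [hMe, hMf]
  · have := Φ.finrank_eq
    rw [hr, Module.finrank_prod, Module.finrank_prod] at this
    simp at this
    omega
  · intro v w
    rw [hΦ, hΦ]
    change _ = B f v * B e w + B e v * B f w + B (π v : L) (π w : L)
    rw [hπ, hπ]
    simp [hee, hef, hff, hfe, hS v e, hS v f]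
    ring

theorem embed (B : LinearMap.BilinForm ℤ L) (hS : Sy B) (hU : Uni B) (hL : Lor B)
    (heven : ∀ v, 2 ∣ B v v) (hr : Module.finrank ℤ L = 10)
    (p m : L) (hp : 0 < B p p) (hm : B m m < 0) :
    ∃ ψ : L →ₗ[ℤ] ℤ × (Fin 9 → ℤ), Function.Injective ψ ∧
      (∀ v, v ∈ LinearMap.range ψ ↔ inS v) ∧ ∀ x y, etaF (ψ x) (ψ y) = 4 * B x y := by
  obtain ⟨z, hz0, hz⟩ := iso_even B hS hU heven (Module.finBasisOfFinrankEq ℤ L hr) p m hp hm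
  obtain ⟨y0, hy0⟩ := uni_nondeg B hS hU z hz0
  obtain ⟨e, f, hee, hef⟩ := prim_iso B hS z y0 hy0 hU hz
  obtain ⟨t, ht⟩ := heven f
  have hfe : B f e = 1 := by rw [hS]; exact hef
  obtain ⟨M, Φ, hMU, hMneg, hMr, hΦ⟩ := hyp_split B hS hU hL heven hr e (f - t • e) hee
    (by simp [hee, hef]) (by simp [hee, hef, hfe, ht]; ring)
  obtain ⟨c, hc, hc4⟩ := good_basis (B.restrict M) (fun a b => hS a b) hMU (fun v => heven v)
    hMneg hMr
  have hpar : ∀ n : ℤ × M, 2 ∣ n.1 - ∑ i, c.equivFun n i := by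
    intro n
    have h := diag_eval (addOne (B.restrict M)) c hc n n
    rw [addOne_apply] at h
    have h1 : 2 ∣ (B.restrict M) n.2 n.2 := heven n.2
    have h2 : 2 ∣ (∑ i, sgn 8 i * (c.equivFun n i * c.equivFun n i)) - ∑ i, c.equivFun n i := by
      rw [← Finset.sum_sub_distrib]
      refine Finset.dvd_sum fun i _ => ?_
      generalize c.equivFun n i = r
      have : 2 ∣ r * r - r := by
        have := Int.even_mul_pred_self r
        rw [mul_sub, mul_one] at this
        exact this.two_dvd
      rcases sgn_odd i with h | h <;> rw [h] <;> omega
    have h3 : 2 ∣ n.1 * n.1 - n.1 := by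
      have := Int.even_mul_pred_self n.1
      rw [mul_sub, mul_one] at this
      exact this.two_dvd
    omega
  choose k hk using hc4
  have hk' : ∀ i, c.equivFun (1, 0) i = 1 + 4 * k i := fun i => by have := hk i; omega
  let θ : (ℤ × ℤ × M) →ₗ[ℤ] ℤ × (Fin 9 → ℤ) :=
    { toFun := fun x => (x.1 - 2 * x.2.1, c.equivFun (x.1 + 2 * x.2.1, (2:ℤ) • x.2.2))
      map_add' := by
        intro x y
        refine Prod.ext ?_ ?_
        · simp; ring
        · change c.equivFun _ = c.equivFun _ + c.equivFun _
          rw [← map_add]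
          congr 1
          refine Prod.ext ?_ ?_
          · simp; ring
          · simp
      map_smul' := by
        intro r x
        refine Prod.ext ?_ ?_
        · simp; ring
        · change c.equivFun _ = r • c.equivFun _
          rw [← map_smul]
          congr 1
          refine Prod.ext ?_ ?_
          · simp; ring
          · simp only [Prod.smul_mk, Prod.smul_snd]; rw [smul_comm] }
  have hθ : ∀ x, θ x = (x.1 - 2 * x.2.1, c.equivFun (x.1 + 2 * x.2.1, (2:ℤ) • x.2.2)) :=
    fun _ => rfl
  have hcoord : ∀ (ε : ℤ) (n : ℤ × M) (i : Fin 9),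
      c.equivFun (ε + 2 * n.1, (2:ℤ) • n.2) i = ε + 2 * (2 * ε * k i + c.equivFun n i) := by
    intro ε n i
    have h1 : (ε + 2 * n.1, (2:ℤ) • n.2) = ε • ((1:ℤ), (0:M)) + (2:ℤ) • n := by
      refine Prod.ext ?_ ?_ <;> simp
    rw [h1, map_add, map_smul, map_smul, Pi.add_apply, Pi.smul_apply, Pi.smul_apply, hk']
    simp only [smul_eq_mul]; ring
  refine ⟨θ ∘ₗ Φ.toLinearMap, ?_, ?_, ?_⟩
  · intro x y hxy
    apply Φ.injective
    simp only [LinearMap.comp_apply, LinearEquiv.coe_coe, hθ] at hxy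
    generalize Φ x = x' at *
    generalize Φ y = y' at *
    have h1 := congrArg Prod.fst hxy
    have h2 := c.equivFun.injective (congrArg Prod.snd hxy)
    have h3 := congrArg Prod.fst h2
    have h4 := congrArg Prod.snd h2
    simp only at h1 h3 h4
    refine Prod.ext (by omega) (Prod.ext (by omega) ?_)
    exact smul_right_injective M (two_ne_zero : (2:ℤ) ≠ 0) h4
  · intro v
    constructor
    · rintro ⟨x, rfl⟩
      simp only [LinearMap.comp_apply, LinearEquiv.coe_coe, hθ]
      generalize Φ x = x'
      refine ⟨x'.1, -x'.2.1, fun i => 2 * x'.1 * k i + c.equivFun x'.2 i, by simp only; ring, ?_, ?_⟩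
      · intro i
        exact hcoord x'.1 x'.2 i
      · have h1 := hpar x'.2
        rw [Finset.sum_add_distrib]
        have : ∑ i, 2 * x'.1 * k i = 2 * (x'.1 * ∑ i, k i) := by
          rw [← Finset.mul_sum]; ring
        rw [this]
        omega
    · rintro ⟨ε, d0, d, h1, h2, h3⟩
      set n : ℤ × M := c.equivFun.symm (fun i => d i - 2 * ε * k i) with hn
      have hn' : c.equivFun n = fun i => d i - 2 * ε * k i := by
        rw [hn, LinearEquiv.apply_symm_apply]
      have h4 := hpar n
      rw [hn', Finset.sum_sub_distrib] at h4
      have : ∑ i, 2 * ε * k i = 2 * (ε * ∑ i, k i) := by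
        rw [← Finset.mul_sum]; ring
      rw [this] at h4
      obtain ⟨j, hj⟩ : 2 ∣ n.1 - d0 := by omega
      refine ⟨Φ.symm (ε + d0 + n.1, j, n.2), ?_⟩
      simp only [LinearMap.comp_apply, LinearEquiv.coe_coe, LinearEquiv.apply_symm_apply, hθ]
      refine Prod.ext ?_ ?_
      · rw [h1]; simp only; omega
      · funext i
        have h5 := hcoord ε n i
        have h6 : ε + d0 + n.1 + 2 * j = ε + 2 * n.1 := by omega
        simp only [h6]
        rw [h5, h2, hn']; ring
  · intro x y
    rw [hΦ]
    simp only [LinearMap.comp_apply, LinearEquiv.coe_coe, hθ, etaF]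
    rw [← diag_eval _ c hc, addOne_apply]
    simp only [map_smul, LinearMap.smul_apply, smul_eq_mul]
    ring

end lattice3

theorem uni_of_det (A : Matrix (Fin 10) (Fin 10) ℤ) (hA : A.IsSymm)
    (hdet : A.det = 1 ∨ A.det = -1) : Uni (Matrix.toBilin' A) := by
  intro φ
  have hu : IsUnit A.det := by rw [Int.isUnit_iff]; exact hdet
  refine ⟨A⁻¹ *ᵥ (fun i => φ (Pi.single i 1)), fun y => ?_⟩
  rw [Matrix.toBilin'_apply', dotProduct_mulVec, ← mulVec_transpose, hA.eq, mulVec_mulVec,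
    mul_nonsing_inv _ hu, one_mulVec]
  have hy : y = ∑ i, y i • (Pi.single i 1 : Fin 10 → ℤ) := by
    ext j; simp [Finset.sum_apply, Pi.single_apply]
  have h2 : φ y = ∑ i, y i * φ (Pi.single i 1) := by
    conv_lhs => rw [hy]
    rw [map_sum]
    exact Finset.sum_congr rfl fun i _ => by rw [map_smul, smul_eq_mul]
  rw [h2]
  exact Finset.sum_congr rfl fun i _ => mul_comm _ _

/-- the real Lorentz form -/
theorem real_lor (U Y : Fin 10 → ℝ) (hU : 0 < U 0 ^ 2 - ∑ i : Fin 9, U i.succ ^ 2)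
    (hUY : U 0 * Y 0 - ∑ i : Fin 9, U i.succ * Y i.succ = 0) (hY : Y ≠ 0) :
    Y 0 ^ 2 - ∑ i : Fin 9, Y i.succ ^ 2 < 0 := by
  by_cases h0 : Y 0 = 0
  · rw [h0]
    have : 0 < ∑ i : Fin 9, Y i.succ ^ 2 := by
      obtain ⟨j, hj⟩ : ∃ j : Fin 9, Y j.succ ≠ 0 := by
        by_contra hcon
        push Not at hcon
        apply hY
        funext i
        exact Fin.cases h0 hcon i
      exact Finset.sum_pos' (fun i _ => sq_nonneg _) ⟨j, Finset.mem_univ _, by positivity⟩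
    linarith
  · have h1 : 0 ≤ ∑ i : Fin 9, (Y 0 * U i.succ - U 0 * Y i.succ)^2 :=
      Finset.sum_nonneg fun i _ => sq_nonneg _
    have h2 : ∑ i : Fin 9, (Y 0 * U i.succ - U 0 * Y i.succ)^2 =
        Y 0 ^ 2 * ∑ i : Fin 9, U i.succ ^ 2 + U 0 ^ 2 * ∑ i : Fin 9, Y i.succ ^ 2
          - 2 * Y 0 * U 0 * ∑ i : Fin 9, U i.succ * Y i.succ := by
      rw [Finset.mul_sum, Finset.mul_sum, Finset.mul_sum, ← Finset.sum_add_distrib,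
        ← Finset.sum_sub_distrib]
      refine Finset.sum_congr rfl fun i _ => ?_
      ring
    have hY0 : 0 < Y 0 ^ 2 := by positivity
    have hs : 0 ≤ ∑ i : Fin 9, U i.succ ^ 2 := Finset.sum_nonneg fun i _ => sq_nonneg _
    have hU0 : 0 < U 0 ^ 2 := by linarith
    have h3 : ∑ i : Fin 9, U i.succ * Y i.succ = U 0 * Y 0 := by linarith
    rw [h2, h3] at h1
    have h4 : 0 < Y 0 ^ 2 * (U 0 ^ 2 - ∑ i : Fin 9, U i.succ ^ 2) := by positivity
    have h5 : U 0 ^ 2 * (Y 0 ^ 2 - ∑ i : Fin 9, Y i.succ ^ 2) < 0 := by nlinarith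
    by_contra hcon
    push Not at hcon
    have : 0 ≤ U 0 ^ 2 * (Y 0 ^ 2 - ∑ i : Fin 9, Y i.succ ^ 2) := by positivity
    linarith

theorem sigD_eval (v w : Fin 10 → ℝ) : v ⬝ᵥ sigD *ᵥ w =
    v 0 * w 0 - ∑ i : Fin 9, v i.succ * w i.succ := by
  simp only [sigD, dotProduct, mulVec_diagonal]
  rw [Fin.sum_univ_succ]
  simp [Fin.succ_ne_zero]
  ring

theorem cast_eval (A : Matrix (Fin 10) (Fin 10) ℤ) (v w : Fin 10 → ℤ) :
    ((Matrix.toBilin' A v w : ℤ) : ℝ) =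
      (fun i => (v i : ℝ)) ⬝ᵥ A.map (Int.cast : ℤ → ℝ) *ᵥ (fun i => (w i : ℝ)) := by
  rw [Matrix.toBilin'_apply']
  simp [dotProduct, mulVec]

theorem lor_of_sig (A : Matrix (Fin 10) (Fin 10) ℤ)
    (hsig : ∃ P : Matrix (Fin 10) (Fin 10) ℝ, IsUnit P.det ∧
      Pᵀ * A.map (Int.cast : ℤ → ℝ) * P = sigD) : Lor (Matrix.toBilin' A) := by
  obtain ⟨P, hP, hPA⟩ := hsig
  have hP2 : P * P⁻¹ = 1 := mul_nonsing_inv _ hP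
  have key : ∀ v w : Fin 10 → ℤ, ((Matrix.toBilin' A v w : ℤ) : ℝ) =
      (P⁻¹ *ᵥ (fun i => (v i : ℝ))) ⬝ᵥ sigD *ᵥ (P⁻¹ *ᵥ (fun i => (w i : ℝ))) := by
    intro v w
    rw [cast_eval, ← hPA, ← mulVec_mulVec, ← mulVec_mulVec, mulVec_mulVec _ P, hP2, one_mulVec,
      dotProduct_mulVec _ Pᵀ, vecMul_transpose, mulVec_mulVec _ P, hP2, one_mulVec]
  intro u y hu huy hy
  have h1 : ((Matrix.toBilin' A y y : ℤ) : ℝ) < 0 := by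
    rw [key, sigD_eval]
    have h2 : (0:ℝ) < ((Matrix.toBilin' A u u : ℤ) : ℝ) := by exact_mod_cast hu
    have h3 : ((Matrix.toBilin' A u y : ℤ) : ℝ) = 0 := by exact_mod_cast huy
    rw [key, sigD_eval] at h2 h3
    have := real_lor (P⁻¹ *ᵥ (fun i => (u i : ℝ))) (P⁻¹ *ᵥ (fun i => (y i : ℝ)))
      (by simpa [sq] using h2) h3 (by
        intro h
        apply hy
        have h4 : P *ᵥ (P⁻¹ *ᵥ (fun i => (y i : ℝ))) = 0 := by rw [h]; simp
        rw [mulVec_mulVec, hP2, one_mulVec] at h4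
        funext i
        have h5 := congrFun h4 i
        simpa using h5)
    simpa [sq] using this
  exact_mod_cast h1

theorem int_approx (F : (Fin 10 → ℝ) → ℝ) (hF : Continuous F)
    (hhom : ∀ (c : ℝ) v, F (c • v) = c^2 * F v) (v : Fin 10 → ℝ) (hv : 0 < F v) :
    ∃ w : Fin 10 → ℤ, 0 < F (fun i => (w i : ℝ)) := by
  have hopen : IsOpen {v | 0 < F v} := isOpen_lt continuous_const hF
  have hd : DenseRange (fun (q : Fin 10 → ℚ) (i : Fin 10) => ((q i : ℚ) : ℝ)) :=
    DenseRange.piMap (fun _ => Rat.denseRange_cast)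
  obtain ⟨q, hq⟩ := hd.exists_mem_open hopen ⟨v, hv⟩
  have hN : ∀ i, ∃ z : ℤ, (z : ℝ) = (((∏ j, (q j).den : ℕ)) : ℝ) * (q i : ℝ) := by
    intro i
    obtain ⟨r, hr⟩ := Finset.dvd_prod_of_mem (fun j => (q j).den) (Finset.mem_univ i)
    refine ⟨r * (q i).num, ?_⟩
    rw [hr]
    have : ((q i).den : ℝ) * (q i : ℝ) = (q i).num := by
      exact_mod_cast Rat.den_mul_eq_num (q i)
    push_cast
    rw [← this]; ring
  choose w hw using hN
  refine ⟨w, ?_⟩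
  have : (fun i => (w i : ℝ)) = (((∏ j, (q j).den : ℕ)) : ℝ) • (fun i => (q i : ℝ)) := by
    funext i; rw [hw]; rfl
  rw [this, hhom]
  have hpos : (0:ℝ) < ((∏ j, (q j).den : ℕ) : ℝ) := by
    have : 0 < ∏ j, (q j).den := Finset.prod_pos fun j _ => (q j).pos
    exact_mod_cast this
  have hq' : 0 < F (fun i => (q i : ℝ)) := hq
  positivity

theorem exists_pm (A : Matrix (Fin 10) (Fin 10) ℤ)
    (hsig : ∃ P : Matrix (Fin 10) (Fin 10) ℝ, IsUnit P.det ∧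
      Pᵀ * A.map (Int.cast : ℤ → ℝ) * P = sigD) :
    (∃ p, 0 < Matrix.toBilin' A p p) ∧ (∃ m, Matrix.toBilin' A m m < 0) := by
  obtain ⟨P, hP, hPA⟩ := hsig
  set R := A.map (Int.cast : ℤ → ℝ)
  have hcont : Continuous fun v : Fin 10 → ℝ => v ⬝ᵥ R *ᵥ v := by
    simp only [dotProduct, mulVec]; fun_prop
  have hhom : ∀ (c : ℝ) (v : Fin 10 → ℝ), (c • v) ⬝ᵥ R *ᵥ (c • v) = c^2 * (v ⬝ᵥ R *ᵥ v) := by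
    intro c v
    rw [mulVec_smul, smul_dotProduct, dotProduct_smul]; simp only [smul_eq_mul]; ring
  have hval : ∀ v : Fin 10 → ℝ, (P *ᵥ v) ⬝ᵥ R *ᵥ (P *ᵥ v) = v ⬝ᵥ sigD *ᵥ v := by
    intro v
    rw [← hPA, ← mulVec_mulVec, ← mulVec_mulVec, dotProduct_mulVec v, vecMul_transpose]
  constructor
  · obtain ⟨w, hw⟩ := int_approx _ hcont hhom (P *ᵥ Pi.single 0 1) (by
      rw [hval, sigD_eval]; simp)
    refine ⟨w, ?_⟩
    have := cast_eval A w w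
    rw [← this] at hw
    exact_mod_cast hw
  · obtain ⟨w, hw⟩ := int_approx (fun v => -(v ⬝ᵥ R *ᵥ v)) hcont.neg
      (fun c v => by rw [hhom]; ring) (P *ᵥ Pi.single 1 1) (by
      rw [hval]; simp [sigD])
    refine ⟨w, ?_⟩
    have := cast_eval A w w
    rw [← this] at hw
    have h2 : ((Matrix.toBilin' A w w : ℤ) : ℝ) < 0 := by linarith
    exact_mod_cast h2

theorem sy_of_symm (A : Matrix (Fin 10) (Fin 10) ℤ) (hA : A.IsSymm) : Sy (Matrix.toBilin' A) := by
  intro x y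
  rw [Matrix.toBilin'_apply', Matrix.toBilin'_apply', dotProduct_mulVec, ← mulVec_transpose, hA.eq,
    dotProduct_comm]

theorem even_of_diag (A : Matrix (Fin 10) (Fin 10) ℤ) (hA : A.IsSymm) (hd : ∀ i, 2 ∣ A i i)
    (v : Fin 10 → ℤ) : 2 ∣ Matrix.toBilin' A v v := by
  have hS := sy_of_symm A hA
  induction v using Pi.single_induction with
  | zero => simp
  | add f g hf hg =>
    simp only [map_add, LinearMap.add_apply]
    rw [hS g f]
    omega
  | single i m =>
    rw [Matrix.toBilin'_apply']
    have : (Pi.single i m : Fin 10 → ℤ) ⬝ᵥ A *ᵥ Pi.single i m = A i i * (m * m) := by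
      simp; ring
    rw [this]
    exact Dvd.dvd.mul_right (hd i) _

theorem embed_mat (A : Matrix (Fin 10) (Fin 10) ℤ)
    (hAsymm : A.IsSymm) (hAeven : ∀ i, 2 ∣ A i i)
    (hAdet : A.det = 1 ∨ A.det = -1)
    (hAsig : ∃ P : Matrix (Fin 10) (Fin 10) ℝ, IsUnit P.det ∧
      Pᵀ * A.map (Int.cast : ℤ → ℝ) * P = sigD) :
    ∃ ψ : (Fin 10 → ℤ) →ₗ[ℤ] ℤ × (Fin 9 → ℤ), Function.Injective ψ ∧
      (∀ v, v ∈ LinearMap.range ψ ↔ inS v) ∧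
      ∀ x y, etaF (ψ x) (ψ y) = 4 * Matrix.toBilin' A x y := by
  obtain ⟨⟨p, hp⟩, ⟨m, hm⟩⟩ := exists_pm A hAsig
  exact embed (Matrix.toBilin' A) (sy_of_symm A hAsymm) (uni_of_det A hAsymm hAdet)
    (lor_of_sig A hAsig) (even_of_diag A hAsymm hAeven) (by simp) p m hp hm

/-- Any two even unimodular `ℤ`-lattices of rank 10 and signature `(1,9)`
are isomorphic. Concretely: if `A` and `B` are symmetric `10×10` integer matrices with
all diagonal entries even, with determinant of absolute value 1, and such that over `ℝ`
each is congruent to `diag(1, -1, …, -1)`, then there exists `P ∈ GL₁₀(ℤ)` with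
`Pᵀ A P = B`. -/
theorem stmt9 (A B : Matrix (Fin 10) (Fin 10) ℤ)
    (hAsymm : A.IsSymm) (hBsymm : B.IsSymm)
    (hAeven : ∀ i, 2 ∣ A i i) (hBeven : ∀ i, 2 ∣ B i i)
    (hAdet : A.det = 1 ∨ A.det = -1) (hBdet : B.det = 1 ∨ B.det = -1)
    (hAsig : ∃ P : Matrix (Fin 10) (Fin 10) ℝ, IsUnit P.det ∧
      Pᵀ * A.map (Int.cast : ℤ → ℝ) * P = sigD)
    (hBsig : ∃ P : Matrix (Fin 10) (Fin 10) ℝ, IsUnit P.det ∧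
      Pᵀ * B.map (Int.cast : ℤ → ℝ) * P = sigD) :
    ∃ P : Matrix (Fin 10) (Fin 10) ℤ, IsUnit P.det ∧ Pᵀ * A * P = B := by
  obtain ⟨ψA, hA1, hA2, hA3⟩ := embed_mat A hAsymm hAeven hAdet hAsig
  obtain ⟨ψB, hB1, hB2, hB3⟩ := embed_mat B hBsymm hBeven hBdet hBsig
  have hrange : LinearMap.range ψB = LinearMap.range ψA := by
    ext v; rw [hA2, hB2]
  let g : (Fin 10 → ℤ) ≃ₗ[ℤ] (Fin 10 → ℤ) :=
    (LinearEquiv.ofInjective ψB hB1).trans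
      ((LinearEquiv.ofEq _ _ hrange).trans (LinearEquiv.ofInjective ψA hA1).symm)
  have hg : ∀ x, ψA (g x) = ψB x := by
    intro x
    have := LinearEquiv.apply_symm_apply (LinearEquiv.ofInjective ψA hA1)
      (LinearEquiv.ofEq _ _ hrange (LinearEquiv.ofInjective ψB hB1 x))
    exact congrArg Subtype.val this
  have hiso : ∀ x y, Matrix.toBilin' A (g x) (g y) = Matrix.toBilin' B x y := by
    intro x y
    have h1 := hA3 (g x) (g y)
    rw [hg, hg, hB3] at h1
    omega
  refine ⟨LinearMap.toMatrix' g.toLinearMap, ?_, ?_⟩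
  · have h : LinearMap.toMatrix' g.toLinearMap * LinearMap.toMatrix' g.symm.toLinearMap = 1 := by
      rw [← LinearMap.toMatrix'_comp]
      simp
    have h' := congrArg Matrix.det h
    rw [det_mul, det_one] at h'
    exact IsUnit.of_mul_eq_one _ h'
  · ext i j
    have h := hiso (Pi.single i 1) (Pi.single j 1)
    have hB : Matrix.toBilin' B (Pi.single i 1) (Pi.single j 1) = B i j := by
      rw [Matrix.toBilin'_single]
    rw [hB] at h
    rw [← h, Matrix.toBilin'_apply']
    have hc : ∀ v, g v = LinearMap.toMatrix' g.toLinearMap *ᵥ v := by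
      intro v; rw [LinearMap.toMatrix'_mulVec]; rfl
    rw [hc, hc, ← qf_conj]
    simp
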